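/- (Theorems 5.2–5.3, verification of the reconstructed Jost solution.) With the matrix triplet data as in the context, assume Γ(x) and Γ̄(x) are invertible for every x ∈ ℝ, and that the scalar function g₁ − g₂ is Lebesgue integrable on [x, ∞) for every x ∈ ℝ, where g₁(z) := C̄·e^{−iĀz}·Γ̄(z)^{−1}·e^{−iĀz}·M̄·A·e^{2iAz}·B and g₂(z) := C·e^{iAz}·Γ(z)^{−1}·e^{iAz}·M·Ā·e^{−2iĀz}·B̄. Set G(x) := ∫_x^∞ (g₁(z) − g₂(z)) dz, and define the reflectionless potentials q(x) := 2·C̄·e^{−iĀx}·Γ̄(x)^{−1}·e^{−iĀx}·B̄·e^{−4G(x)} and r(x) := 2·C·e^{iAx}·Γ(x)^{−1}·e^{iAx}·B·e^{4G(x)}. Let ζ ∈ ℂ be such that λ := ζ² is not an eigenvalue of Ā, and define g₃(ζ, x) := i·C̄·e^{−iĀx}·Γ̄(x)^{−1}·e^{−iĀx}·(Ā − λI)^{−1}·B̄, g₄(ζ, x) := 1 − i·C·e^{iAx}·Γ(x)^{−1}·e^{iAx}·M·Ā·e^{−2iĀx}·(Ā − λI)^{−1}·B̄, ψ₁(ζ,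 x) := ζ·e^{iλx}·g₃(ζ, x)·e^{−2G(x)}, and ψ₂(ζ, x) := e^{iλx}·g₄(ζ, x)·e^{2G(x)}. Then for every x ∈ ℝ the pair (ψ₁(ζ,·), ψ₂(ζ,·)) is a solution of system (1.1) with potentials q, r and spectral parameter ζ: ∂ψ₁/∂x = −iζ²·ψ₁ + ζ·q(x)·ψ₂ and ∂ψ₂/∂x = ζ·r(x)·ψ₁ + iζ²·ψ₂. -/

import Mathlib

open MeasureTheory Matrix

/-- e^{iAt} for a complex square matrix A and real t. -/
noncomputable def eiA {n : ℕ} (A : Matrix (Fin n) (Fin n) ℂ) (t : ℝ) :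
    Matrix (Fin n) (Fin n) ℂ :=
  NormedSpace.exp ((Complex.I * t) • A)

/-!
Integrating `d/dz (e^{iAz} B C̄ e^{-iĀz})` over `[0, ∞)` gives the Sylvester equation
`A M - M Ā = i B C̄`, and likewise `Ā M̄ - M̄ A = -i B̄ C`. Absorbing the outer exponentials into
the inverses, `e^{iAx} Γ⁻¹ e^{iAx}` and `e^{-iĀx} Γ̄⁻¹ e^{-iĀx}` become
`P = (e^{-2iAx} - M Ā e^{-2iĀx} M̄)⁻¹` and `Q = (e^{2iĀx} - M̄ A e^{2iAx} M)⁻¹`. Their derivatives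
involve the right-hand sides of the Sylvester equations, which have rank one, so the derivative of a
scalar such as `C̄ Q w` splits into products of scalars of the same kind; a push-through identity
exchanges `P` and `Q` up to another rank-one term.

With `u = C P B` and `v = C̄ Q B̄`, the pair `(ζ e^{iλx} g₃, e^{iλx} g₄)` satisfies the system with
potentials `2v` and `2u` up to the diagonal terms `∓2iuv`. Since the trace of `P (P⁻¹ A - A P⁻¹)`
vanishes, `g₁ - g₂ = iuv`, that is `G' = -iuv`, and the factors `e^{∓2G}` remove the diagonal terms.
-/

section Decay

open Filter Topology Asymptotics
open scoped Matrix.Norms.Operator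

variable {n : Type*} [Fintype n] [DecidableEq n]

theorem exp_smul_eq_smul_exp_smul_sub (K : Matrix n n ℂ) (t μ : ℂ) :
    NormedSpace.exp (t • K) = Complex.exp (t * μ) • NormedSpace.exp (t • (K - μ • 1)) := by
  have hcomm : Commute (algebraMap ℂ (Matrix n n ℂ) (t * μ)) (t • (K - μ • 1)) :=
    Algebra.commutes _ _
  have hexp : NormedSpace.exp (algebraMap ℂ (Matrix n n ℂ) (t * μ)) = Complex.exp (t * μ) • 1 := by
    rw [Complex.exp_eq_exp_ℂ, ← Algebra.algebraMap_eq_smul_one]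
    exact (NormedSpace.algebraMap_exp_comm (𝔸 := Matrix n n ℂ) (t * μ)).symm
  calc NormedSpace.exp (t • K)
      = NormedSpace.exp (algebraMap ℂ (Matrix n n ℂ) (t * μ) + t • (K - μ • 1)) := by
        rw [Algebra.algebraMap_eq_smul_one, smul_sub, smul_smul, add_sub_cancel]
    _ = _ := by rw [Matrix.exp_add_of_commute _ _ hcomm, hexp, smul_mul_assoc, one_mul]

theorem exp_smul_mulVec_eq_sum_of_pow_mulVec_eq_zero {N : Matrix n n ℂ} {v : n → ℂ} {k : ℕ}
    (hv : N ^ k *ᵥ v = 0) (t : ℂ) :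
    NormedSpace.exp (t • N) *ᵥ v =
      ∑ j ∈ Finset.range k, t ^ j • ((j.factorial : ℂ)⁻¹ • N ^ j *ᵥ v) := by
  have hasSum_exp : HasSum (fun j : ℕ => t ^ j • ((j.factorial : ℂ)⁻¹ • N ^ j *ᵥ v))
      (NormedSpace.exp (t • N) *ᵥ v) := by
    have h := (NormedSpace.exp_series_hasSum_exp' (𝕂 := ℂ) (t • N)).map
      (AddMonoidHom.mk' (· *ᵥ v) fun X Y => add_mulVec X Y v)
      (continuous_id.matrix_mulVec continuous_const)
    refine h.congr_fun fun j => ?_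
    simp [smul_pow, smul_mulVec, smul_comm (t ^ j)]
  have pow_mulVec_eq_zero : ∀ j ∉ Finset.range k,
      t ^ j • ((j.factorial : ℂ)⁻¹ • N ^ j *ᵥ v) = 0 := by
    intro j hj
    obtain ⟨l, rfl⟩ := Nat.exists_eq_add_of_le' (not_lt.1 (Finset.mem_range.not.1 hj))
    rw [pow_add N, ← mulVec_mulVec, hv, mulVec_zero, smul_zero, smul_zero]
  exact hasSum_exp.unique (hasSum_sum_of_ne_finset_zero pow_mulVec_eq_zero)

theorem isBigO_cexp_mul_pow {μ : ℂ} {b : ℝ} (hμ : μ.re < -b) (j : ℕ) :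
    (fun t : ℝ => Complex.exp (t * μ) * (t : ℂ) ^ j) =O[atTop] fun t => Real.exp (-b * t) := by
  have hpow := (isLittleO_pow_exp_pos_mul_atTop j (b := -b - μ.re) (by linarith)).isBigO
  refine (((isBigO_refl (fun t : ℝ => Real.exp (t * μ.re)) atTop).mul hpow).norm_left.congr
    (fun t => ?_) fun t => ?_).of_norm_left
  · simp [Complex.norm_exp]
  · rw [← Real.exp_add]
    ring_nf

theorem isBigO_exp_smul_mulVec_of_mem_maxGenEigenspace {K : Matrix n n ℂ} {μ : ℂ} {v : n → ℂ}
    (hv : v ∈ Module.End.maxGenEigenspace (toLin' K) μ) {b : ℝ} (hμ : μ.re < -b) :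
    (fun t : ℝ => NormedSpace.exp ((t : ℂ) • K) *ᵥ v) =O[atTop] fun t => Real.exp (-b * t) := by
  obtain ⟨k, hk⟩ := (Module.End.mem_maxGenEigenspace _ _ _).1 hv
  have hk' : (K - μ • 1) ^ k *ᵥ v = 0 := by
    rwa [Module.End.one_eq_id, ← toLin'_one, ← map_smul, ← map_sub, ← toLin'_pow,
      toLin'_apply] at hk
  simp only [exp_smul_eq_smul_exp_smul_sub K _ μ, smul_mulVec,
    exp_smul_mulVec_eq_sum_of_pow_mulVec_eq_zero hk', Finset.smul_sum, smul_smul _ (_ ^ _)]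
  refine .fun_sum fun j _ => ?_
  simpa only [smul_eq_mul, mul_one] using (isBigO_cexp_mul_pow hμ j).smul
    (isBigO_const_const ((j.factorial : ℂ)⁻¹ • (K - μ • 1) ^ j *ᵥ v) (one_ne_zero' ℝ) atTop)

theorem exists_pos_forall_mem_spectrum_re_lt_neg {K : Matrix n n ℂ}
    (hK : ∀ μ ∈ spectrum ℂ K, μ.re < 0) :
    ∃ b > (0 : ℝ), ∀ μ ∈ spectrum ℂ K, μ.re < -b := by
  have h : ∀ᶠ b : ℝ in 𝓝[>] 0, ∀ μ ∈ spectrum ℂ K, μ.re < -b :=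
    (eventually_all_finite (Matrix.finite_spectrum K)).2 fun μ hμ =>
      ((eventually_lt_nhds (neg_pos.2 (hK μ hμ))).filter_mono nhdsWithin_le_nhds).mono
        fun _ => lt_neg_of_lt_neg
  exact (eventually_mem_nhdsWithin.and h).exists

theorem exists_pos_forall_isBigO_exp_smul {K : Matrix n n ℂ}
    (hK : ∀ μ ∈ spectrum ℂ K, μ.re < 0) :
    ∃ b > (0 : ℝ), ∀ i j,
      (fun t : ℝ => NormedSpace.exp ((t : ℂ) • K) i j) =O[atTop] fun t => Real.exp (-b * t) := by
  obtain ⟨b, hb, hKb⟩ := exists_pos_forall_mem_spectrum_re_lt_neg hK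
  have isBigO_mulVec (v : n → ℂ) :
      (fun t : ℝ => NormedSpace.exp ((t : ℂ) • K) *ᵥ v) =O[atTop] fun t => Real.exp (-b * t) := by
    have hv : v ∈ ⨆ μ, Module.End.maxGenEigenspace (toLin' K) μ := by
      rw [Module.End.iSup_maxGenEigenspace_eq_top]
      exact Submodule.mem_top
    induction hv using Submodule.iSup_induction' with
    | zero => simpa only [mulVec_zero] using isBigO_zero _ _
    | add v w _ _ hv hw => simpa only [mulVec_add] using hv.add hw
    | mem μ v hv =>
      obtain rfl | hv0 := eq_or_ne v 0
      · simpa only [mulVec_zero] using isBigO_zero _ _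
      have hμ : μ ∈ spectrum ℂ K := by
        rw [← spectrum_toLin', ← Module.End.hasEigenvalue_iff_mem_spectrum]
        exact Module.End.HasUnifEigenvalue.lt zero_lt_one (Submodule.ne_bot_iff _ |>.2 ⟨v, hv, hv0⟩)
      exact isBigO_exp_smul_mulVec_of_mem_maxGenEigenspace hv (hKb μ hμ)
  refine ⟨b, hb, fun i j => ?_⟩
  simpa using isBigO_pi.1 (isBigO_mulVec (Pi.single j 1)) i

end Decay

section Calculus

variable {𝕜 𝔸 l m n : Type*} [NontriviallyNormedField 𝕜] {x : 𝕜}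

section Ring

variable [NormedRing 𝔸] [NormedAlgebra 𝕜 𝔸]

theorem hasDerivAt_matrix [Finite m] [Finite n] {X : 𝕜 → Matrix m n 𝔸} {X' : Matrix m n 𝔸} :
    HasDerivAt X X' x ↔ ∀ i j, HasDerivAt (fun t => X t i j) (X' i j) x := by
  have := Fintype.ofFinite m
  have := Fintype.ofFinite n
  exact hasDerivAt_pi.trans <| forall_congr' fun _ => hasDerivAt_pi

theorem hasDerivAt_matrix_mul [Finite l] [Fintype m] [Finite n] {X : 𝕜 → Matrix l m 𝔸}
    {Y : 𝕜 → Matrix m n 𝔸} {X' : Matrix l m 𝔸} {Y' : Matrix m n 𝔸}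
    (hX : HasDerivAt X X' x) (hY : HasDerivAt Y Y' x) :
    HasDerivAt (fun t => X t * Y t) (X' * Y x + X x * Y') x := by
  rw [hasDerivAt_matrix] at hX hY ⊢
  intro i j
  simp only [Matrix.add_apply, mul_apply, ← Finset.sum_add_distrib]
  exact HasDerivAt.fun_sum fun k _ => (hX i k).fun_mul (hY k j)

theorem hasDerivAt_const_matrix_mul [Finite l] [Fintype m] [Finite n] (K : Matrix l m 𝔸)
    {X : 𝕜 → Matrix m n 𝔸} {X' : Matrix m n 𝔸} (hX : HasDerivAt X X' x) :
    HasDerivAt (fun t => K * X t) (K * X') x := by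
  have hK : HasDerivAt (fun _ => K) 0 x := hasDerivAt_matrix.2 fun i j => hasDerivAt_const x (K i j)
  simpa only [Matrix.zero_mul, zero_add] using hasDerivAt_matrix_mul hK hX

theorem hasDerivAt_matrix_mul_const [Finite l] [Fintype m] [Finite n] {X : 𝕜 → Matrix l m 𝔸}
    {X' : Matrix l m 𝔸} (hX : HasDerivAt X X' x) (K : Matrix m n 𝔸) :
    HasDerivAt (fun t => X t * K) (X' * K) x := by
  have hK : HasDerivAt (fun _ => K) 0 x := hasDerivAt_matrix.2 fun i j => hasDerivAt_const x (K i j)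
  simpa only [Matrix.mul_zero, add_zero] using hasDerivAt_matrix_mul hX hK

end Ring

open scoped Matrix.Norms.Operator in
theorem hasDerivAt_matrix_inv [RCLike 𝔸] [NormedAlgebra 𝕜 𝔸] [Fintype n]
    [DecidableEq n] {X : 𝕜 → Matrix n n 𝔸} {X' : Matrix n n 𝔸} (hX : HasDerivAt X X' x)
    (hu : IsUnit (X x)) :
    HasDerivAt (fun t => (X t)⁻¹) (-((X x)⁻¹ * X' * (X x)⁻¹)) x := by
  obtain ⟨U, hU⟩ := hu
  have h := (hasFDerivAt_ringInverse (𝕜 := 𝕜) U).comp_hasDerivAt_of_eq x hX hU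
  simpa [Function.comp_def, ← nonsing_inv_eq_ringInverse, ← hU] using! h

open scoped Matrix.Norms.Operator in
theorem hasDerivAt_exp_ofReal_smul [Fintype n] [DecidableEq n] (K : Matrix n n ℂ) (x : ℝ) :
    HasDerivAt (fun t : ℝ => NormedSpace.exp ((t : ℂ) • K))
      (K * NormedSpace.exp ((x : ℂ) • K)) x := by
  simpa using! (hasDerivAt_exp_smul_const' K (x : ℂ)).scomp x Complex.ofRealCLM.hasDerivAt

theorem hasDerivAt_integral_Ioi {E : Type*} [NormedAddCommGroup E] [NormedSpace ℝ E]
    [CompleteSpace E] {f : ℝ → E} (hf : Continuous f) (hint : ∀ x, IntegrableOn f (Set.Ici x))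
    (x : ℝ) : HasDerivAt (fun t => ∫ z in Set.Ioi t, f z) (-f x) x := by
  have hint' (x : ℝ) : IntegrableOn f (Set.Ioi x) := (hint x).mono_set Set.Ioi_subset_Ici_self
  have hsplit (t : ℝ) : (∫ z in Set.Ioi t, f z) = (∫ z in Set.Ioi x, f z) - ∫ z in x..t, f z := by
    rw [← intervalIntegral.integral_Ioi_sub_Ioi' (hint' x) (hint' t), sub_sub_cancel]
  rw [funext hsplit]
  exact (hf.integral_hasStrictDerivAt x x).hasDerivAt.const_sub _

end Calculus

section Sylvester

open Filter Asymptotics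

variable {l m n : Type*} [Fintype m]

theorem isBigO_matrix_mul_apply {α : Type*} {F : Filter α} {X : α → Matrix l m ℂ}
    {Y : α → Matrix m n ℂ} {u v : α → ℝ} (hX : ∀ i j, (fun t => X t i j) =O[F] u)
    (hY : ∀ i j, (fun t => Y t i j) =O[F] v) (i : l) (j : n) :
    (fun t => (X t * Y t) i j) =O[F] fun t => u t * v t := by
  simp only [mul_apply]
  exact .fun_sum fun k _ => (hX i k).mul (hY k j)

section Integral

variable {α : Type*} [MeasurableSpace α] {μ : Measure α}

theorem integrable_const_matrix_mul_apply (K : Matrix l m ℂ) {f : α → Matrix m n ℂ}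
    (hf : ∀ i j, Integrable (fun t => f t i j) μ) (i : l) (j : n) :
    Integrable (fun t => (K * f t) i j) μ := by
  simp only [mul_apply]
  exact integrable_finsetSum _ fun k _ => (hf k j).const_mul _

theorem integrable_matrix_mul_const_apply {f : α → Matrix l m ℂ}
    (hf : ∀ i j, Integrable (fun t => f t i j) μ) (K : Matrix m n ℂ) (i : l) (j : n) :
    Integrable (fun t => (f t * K) i j) μ := by
  simp only [mul_apply]
  exact integrable_finsetSum _ fun k _ => (hf i k).mul_const _

theorem integral_const_matrix_mul_apply (K : Matrix l m ℂ) {f : α → Matrix m n ℂ}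
    (hf : ∀ i j, Integrable (fun t => f t i j) μ) (i : l) (j : n) :
    ∫ t, (K * f t) i j ∂μ = (K * of fun i j => ∫ t, f t i j ∂μ) i j := by
  simp only [mul_apply, of_apply, ← integral_const_mul]
  exact integral_finsetSum _ fun k _ => (hf k j).const_mul _

theorem integral_matrix_mul_const_apply {f : α → Matrix l m ℂ}
    (hf : ∀ i j, Integrable (fun t => f t i j) μ) (K : Matrix m n ℂ) (i : l) (j : n) :
    ∫ t, (f t * K) i j ∂μ = ((of fun i j => ∫ t, f t i j ∂μ) * K) i j := by
  simp only [mul_apply, of_apply, ← integral_mul_const]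
  exact integral_finsetSum _ fun k _ => (hf i k).mul_const _

end Integral

variable [Fintype n]

theorem sylvester_integral_eq_neg {K : Matrix m m ℂ} {L : Matrix n n ℂ} {f : ℝ → Matrix m n ℂ}
    (hf : ∀ x, HasDerivAt f (K * f x + f x * L) x)
    (hint : ∀ i j, IntegrableOn (fun t => f t i j) (Set.Ioi 0)) :
    (K * of fun i j => ∫ t in Set.Ioi 0, f t i j) +
      (of fun i j => ∫ t in Set.Ioi 0, f t i j) * L = -f 0 := by
  ext i j
  have hderiv (x : ℝ) : HasDerivAt (fun t => f t i j) ((K * f x) i j + (f x * L) i j) x :=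
    hasDerivAt_matrix.1 (hf x) i j
  have hKf := integrable_const_matrix_mul_apply K hint i j
  have hfL := integrable_matrix_mul_const_apply hint L i j
  have hlim := tendsto_zero_of_hasDerivAt_of_integrableOn_Ioi (fun x _ => hderiv x)
    (hKf.add hfL) (hint i j)
  have hftc := integral_Ioi_of_hasDerivAt_of_tendsto' (fun x _ => hderiv x) (hKf.add hfL) hlim
  rwa [integral_add hKf hfL, integral_const_matrix_mul_apply K hint,
    integral_matrix_mul_const_apply hint, zero_sub] at hftc

variable [DecidableEq m] [DecidableEq n] {K : Matrix m m ℂ} {L : Matrix n n ℂ}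

theorem hasDerivAt_exp_mul_mul_exp (K : Matrix m m ℂ) (D : Matrix m n ℂ) (L : Matrix n n ℂ)
    (x : ℝ) :
    HasDerivAt (fun t : ℝ => NormedSpace.exp ((t : ℂ) • K) * D * NormedSpace.exp ((t : ℂ) • L))
      (K * (NormedSpace.exp ((x : ℂ) • K) * D * NormedSpace.exp ((x : ℂ) • L)) +
        NormedSpace.exp ((x : ℂ) • K) * D * NormedSpace.exp ((x : ℂ) • L) * L) x := by
  have hcomm : L * NormedSpace.exp ((x : ℂ) • L) = NormedSpace.exp ((x : ℂ) • L) * L :=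
    ((Commute.refl L).smul_right (x : ℂ)).exp_right.eq
  simpa only [hcomm, Matrix.mul_assoc] using hasDerivAt_matrix_mul
    (hasDerivAt_matrix_mul_const (hasDerivAt_exp_ofReal_smul K x) D)
    (hasDerivAt_exp_ofReal_smul L x)

theorem integrableOn_exp_mul_mul_exp (hK : ∀ μ ∈ spectrum ℂ K, μ.re < 0)
    (hL : ∀ μ ∈ spectrum ℂ L, μ.re < 0) (D : Matrix m n ℂ) (i : m) (j : n) :
    IntegrableOn
      (fun t : ℝ => (NormedSpace.exp ((t : ℂ) • K) * D * NormedSpace.exp ((t : ℂ) • L)) i j)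
      (Set.Ioi 0) := by
  obtain ⟨a, ha, hKa⟩ := exists_pos_forall_isBigO_exp_smul hK
  obtain ⟨b, hb, hLb⟩ := exists_pos_forall_isBigO_exp_smul hL
  have hcont : Continuous fun t : ℝ =>
      (NormedSpace.exp ((t : ℂ) • K) * D * NormedSpace.exp ((t : ℂ) • L)) i j :=
    continuous_iff_continuousAt.2 fun x =>
      (hasDerivAt_matrix.1 (hasDerivAt_exp_mul_mul_exp K D L x) i j).continuousAt
  have hdecay : (fun t : ℝ =>
      (NormedSpace.exp ((t : ℂ) • K) * D * NormedSpace.exp ((t : ℂ) • L)) i j) =O[atTop]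
        fun t => Real.exp (-(a + b) * t) := by
    have hD (i j) := isBigO_const_const (D i j) (one_ne_zero' ℝ) (atTop : Filter ℝ)
    refine (isBigO_matrix_mul_apply (isBigO_matrix_mul_apply hKa hD) hLb i j).congr_right
      fun t => ?_
    rw [mul_one, ← Real.exp_add, neg_add, add_mul]
  exact ((hcont.locallyIntegrable.locallyIntegrableOn _).integrableOn_of_isBigO_atTop hdecay
    ⟨_, Ioi_mem_atTop 0, exp_neg_integrableOn_Ioi 0 (add_pos ha hb)⟩).mono_set
      Set.Ioi_subset_Ici_self

theorem sylvester_of_eq_integral_exp_mul_mul_exp (hK : ∀ μ ∈ spectrum ℂ K, μ.re < 0)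
    (hL : ∀ μ ∈ spectrum ℂ L, μ.re < 0) {D X : Matrix m n ℂ}
    (hX : ∀ i j, X i j = ∫ t in Set.Ioi (0 : ℝ),
      (NormedSpace.exp ((t : ℂ) • K) * D * NormedSpace.exp ((t : ℂ) • L)) i j) :
    K * X + X * L = -D := by
  obtain rfl : X = of fun i j => ∫ t in Set.Ioi (0 : ℝ),
      (NormedSpace.exp ((t : ℂ) • K) * D * NormedSpace.exp ((t : ℂ) • L)) i j := Matrix.ext hX
  simpa using sylvester_integral_eq_neg (hasDerivAt_exp_mul_mul_exp K D L)
    (integrableOn_exp_mul_mul_exp hK hL D)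

end Sylvester

section Algebra

variable {R m n : Type*} [Fintype m] [Fintype n]

section Ring

variable [Ring R] [DecidableEq m] [DecidableEq n] {A E K P : Matrix m m R}
  {Ab D F Q : Matrix n n R} {M : Matrix m n R} {Mb : Matrix n m R}

theorem mul_mul_inv_eq_inv_mul_mul_add (hEK : E * K = A) (hDF : D * F = Ab)
    (hP : P * (E - M * D * Mb) = 1) (hQ : (F - Mb * K * M) * Q = 1) :
    K * M * Q = P * M * D + P * (A * M - M * Ab) * Q := by
  have key : (E - M * D * Mb) * (K * M) = A * M - M * Ab + M * D * (F - Mb * K * M) := by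
    simp only [← hEK, ← hDF, Matrix.sub_mul, Matrix.mul_sub, Matrix.mul_assoc]
    abel
  calc K * M * Q = P * ((E - M * D * Mb) * (K * M)) * Q := by
        rw [← Matrix.mul_assoc P, hP, Matrix.one_mul]
    _ = P * (A * M - M * Ab) * Q + P * M * D * ((F - Mb * K * M) * Q) := by
        rw [key]
        simp only [Matrix.mul_add, Matrix.add_mul, Matrix.mul_assoc]
    _ = P * M * D + P * (A * M - M * Ab) * Q := by rw [hQ, Matrix.mul_one, add_comm]

theorem add_mul_inv_mul_eq_inv_mul (hKE : K * E = A) (hFD : F * D = Ab)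
    (hP : (E - M * D * Mb) * P = 1) (hQ : Q * (F - Mb * K * M) = 1) :
    D + D * Mb * P * M * D = Q * (Ab + (Ab * Mb - Mb * A) * P * M * D) := by
  have push : D * Mb * P = Q * Mb * K + Q * (Ab * Mb - Mb * A) * P :=
    mul_mul_inv_eq_inv_mul_mul_add hFD hKE hQ hP
  calc D + D * Mb * P * M * D
      = Q * (F - Mb * K * M) * D +
          (Q * Mb * K + Q * (Ab * Mb - Mb * A) * P) * M * D := by
        rw [hQ, Matrix.one_mul, push]
    _ = Q * (F * D + (Ab * Mb - Mb * A) * P * M * D) := by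
        simp only [Matrix.mul_add, Matrix.add_mul, Matrix.mul_sub, Matrix.sub_mul,
          Matrix.mul_assoc]
        abel
    _ = Q * (Ab + (Ab * Mb - Mb * A) * P * M * D) := by rw [hFD]

end Ring

theorem mul_inv_sub_smul_one_mul {k : Type*} [Field R] [DecidableEq n] {K : Matrix n n R} {ν : R}
    (hν : ν ∉ spectrum R K) (Y : Matrix n k R) :
    K * ((K - ν • 1)⁻¹ * Y) = Y + ν • ((K - ν • 1)⁻¹ * Y) := by
  have hu : IsUnit (K - ν • 1) := by
    simpa only [Algebra.algebraMap_eq_smul_one, neg_sub] using (spectrum.notMem_iff.1 hν).neg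
  have hinv := mul_nonsing_inv_cancel_left (K - ν • 1) Y ((isUnit_iff_isUnit_det _).1 hu)
  rwa [Matrix.sub_mul, Matrix.smul_mul, Matrix.one_mul, sub_eq_iff_eq_add] at hinv

theorem trace_inv_mul_commutator_add_eq_zero [CommRing R] [DecidableEq m] {A E P : Matrix m m R}
    {Ab D : Matrix n n R} {M : Matrix m n R} {Mb : Matrix n m R} (hAE : A * E = E * A)
    (hAbD : Ab * D = D * Ab) (hP : P * (E - M * D * Mb) = 1) :
    trace (P * ((A * M - M * Ab) * D * Mb + M * D * (Ab * Mb - Mb * A))) = 0 := by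
  have hP' : (E - M * D * Mb) * P = 1 := mul_eq_one_comm.1 hP
  have commutator : (A * M - M * Ab) * D * Mb + M * D * (Ab * Mb - Mb * A) =
      (E - M * D * Mb) * A - A * (E - M * D * Mb) := by
    simp only [Matrix.mul_sub, Matrix.sub_mul, Matrix.mul_assoc, hAE]
    rw [← Matrix.mul_assoc D Ab, ← hAbD, Matrix.mul_assoc]
    abel
  rw [commutator, Matrix.mul_sub, trace_sub, ← Matrix.mul_assoc, hP, Matrix.one_mul,
    ← Matrix.mul_assoc, trace_mul_comm, ← Matrix.mul_assoc, hP', Matrix.one_mul, sub_self]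

theorem mul_mul_mul_apply_fin_one {k l : Type*} [NonUnitalSemiring R] (X : Matrix k m R)
    (B : Matrix m (Fin 1) R) (C : Matrix (Fin 1) n R) (Y : Matrix n l R) (i : k) (j : l) :
    (X * (B * C) * Y) i j = (X * B) i 0 * (C * Y) 0 j := by
  rw [← Matrix.mul_assoc, Matrix.mul_assoc _ C, mul_apply, Fin.sum_univ_one]

theorem trace_mul_mul_fin_one [CommSemiring R] (X : Matrix m n R) (B : Matrix n (Fin 1) R)
    (C : Matrix (Fin 1) m R) : trace (X * (B * C)) = (C * X * B) 0 0 := by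
  rw [← Matrix.mul_assoc, trace_mul_comm, ← Matrix.mul_assoc, trace_fin_one]

end Algebra

section InverseFlow

variable {𝕜 𝔸 m n : Type*} [NontriviallyNormedField 𝕜] [RCLike 𝔸] [NormedAlgebra 𝕜 𝔸] [Fintype m]
  [Fintype n] [DecidableEq m] {A : Matrix m m 𝔸} {Ab : Matrix n n 𝔸} {E : 𝕜 → Matrix m m 𝔸}
  {D : 𝕜 → Matrix n n 𝔸} {c : 𝔸} {x : 𝕜}

open scoped Matrix.Norms.Operator in
theorem hasDerivAt_inv_sub_mul_mul (M : Matrix m n 𝔸) (Mb : Matrix n m 𝔸)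
    (hE : HasDerivAt E (c • (A * E x)) x) (hD : HasDerivAt D (c • (Ab * D x)) x)
    (hu : IsUnit (E x - M * D x * Mb)) :
    HasDerivAt (fun t => (E t - M * D t * Mb)⁻¹)
      (-c • ((E x - M * D x * Mb)⁻¹ * A + (E x - M * D x * Mb)⁻¹ * (A * M - M * Ab) * D x * Mb *
        (E x - M * D x * Mb)⁻¹)) x := by
  have hW : HasDerivAt (fun t => E t - M * D t * Mb)
      (c • (A * (E x - M * D x * Mb) + (A * M - M * Ab) * D x * Mb)) x := by
    convert! hE.sub (hasDerivAt_matrix_mul_const (hasDerivAt_const_matrix_mul M hD) Mb) using 1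
    simp only [Matrix.mul_sub, Matrix.sub_mul, Matrix.mul_assoc, Matrix.mul_smul, Matrix.smul_mul,
      smul_sub, smul_add]
    abel
  convert! hasDerivAt_matrix_inv hW hu using 1
  have hinv := mul_nonsing_inv _ ((isUnit_iff_isUnit_det _).1 hu)
  rw [Matrix.mul_smul, Matrix.smul_mul, neg_smul, Matrix.mul_add, Matrix.add_mul,
    ← Matrix.mul_assoc, Matrix.mul_assoc (_ * A), hinv, Matrix.mul_one]
  simp only [Matrix.mul_assoc]

theorem hasDerivAt_inv_sub_mul_mul_mul_mul (M : Matrix m n 𝔸) (Mb : Matrix n m 𝔸)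
    (hE : HasDerivAt E (c • (A * E x)) x) (hD : HasDerivAt D (c • (Ab * D x)) x)
    (hu : IsUnit (E x - M * D x * Mb)) :
    HasDerivAt (fun t => (E t - M * D t * Mb)⁻¹ * M * D t)
      (-c • ((E x - M * D x * Mb)⁻¹ * (A * M - M * Ab) *
        (D x + D x * Mb * (E x - M * D x * Mb)⁻¹ * M * D x))) x := by
  convert! hasDerivAt_matrix_mul
    (hasDerivAt_matrix_mul_const (hasDerivAt_inv_sub_mul_mul M Mb hE hD hu) M) hD using 1
  simp only [Matrix.mul_sub, Matrix.sub_mul, Matrix.mul_add, Matrix.add_mul, Matrix.mul_assoc,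
    Matrix.mul_smul, Matrix.smul_mul, Matrix.neg_mul, neg_smul, smul_add, smul_sub]
  abel

end InverseFlow

section ImaginaryExponential

variable {m n : ℕ} (A : Matrix (Fin n) (Fin n) ℂ)

theorem eiA_eq_exp_smul_I_smul (t : ℝ) :
    eiA A t = NormedSpace.exp ((t : ℂ) • (Complex.I • A)) := by
  rw [eiA, smul_smul, mul_comm]

theorem eiA_neg_eq_exp_smul_neg_I_smul (t : ℝ) :
    eiA A (-t) = NormedSpace.exp ((t : ℂ) • (-Complex.I • A)) := by
  rw [eiA, smul_smul, Complex.ofReal_neg, mul_neg, mul_neg, mul_comm]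

theorem eiA_zero : eiA A 0 = 1 := by
  simp [eiA]

theorem eiA_add (s t : ℝ) : eiA A (s + t) = eiA A s * eiA A t := by
  simp only [eiA, Complex.ofReal_add, mul_add, add_smul]
  exact exp_add_of_commute _ _ (((Commute.refl A).smul_left _).smul_right _)

theorem eiA_mul_eiA_neg (t : ℝ) : eiA A t * eiA A (-t) = 1 := by
  rw [← eiA_add, add_neg_cancel, eiA_zero]

theorem eiA_neg_mul_eiA (t : ℝ) : eiA A (-t) * eiA A t = 1 := by
  rw [← eiA_add, neg_add_cancel, eiA_zero]

theorem commute_eiA (t : ℝ) : Commute A (eiA A t) :=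
  ((Commute.refl A).smul_right _).exp_right

theorem isUnit_eiA (t : ℝ) : IsUnit (eiA A t) :=
  .of_mul_eq_one _ (eiA_mul_eiA_neg A t)

theorem eiA_neg_mul_mul_eiA (s : ℝ) : eiA A (-s) * (A * eiA A s) = A := by
  rw [← Matrix.mul_assoc, ← (commute_eiA A (-s)).eq, Matrix.mul_assoc, eiA_neg_mul_eiA,
    Matrix.mul_one]

theorem eiA_mul_mul_eiA_neg (s : ℝ) : eiA A s * (A * eiA A (-s)) = A := by
  simpa only [neg_neg] using eiA_neg_mul_mul_eiA A (-s)

theorem mul_eiA_mul_eiA_neg (s : ℝ) : A * eiA A s * eiA A (-s) = A := by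
  rw [Matrix.mul_assoc, eiA_mul_eiA_neg, Matrix.mul_one]

theorem mul_eiA_neg_mul_eiA (s : ℝ) : A * eiA A (-s) * eiA A s = A := by
  rw [Matrix.mul_assoc, eiA_neg_mul_eiA, Matrix.mul_one]

theorem hasDerivAt_eiA (x : ℝ) : HasDerivAt (eiA A) (Complex.I • (A * eiA A x)) x := by
  rw [funext (eiA_eq_exp_smul_I_smul A), ← Matrix.smul_mul]
  exact hasDerivAt_exp_ofReal_smul _ x

theorem hasDerivAt_eiA_neg (x : ℝ) :
    HasDerivAt (fun t => eiA A (-t)) (-Complex.I • (A * eiA A (-x))) x := by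
  rw [funext (eiA_neg_eq_exp_smul_neg_I_smul A), eiA_neg_eq_exp_smul_neg_I_smul, ← Matrix.smul_mul]
  exact hasDerivAt_exp_ofReal_smul _ x

theorem hasDerivAt_mul_eiA (x : ℝ) :
    HasDerivAt (fun t => A * eiA A t) (Complex.I • (A * (A * eiA A x))) x := by
  simpa only [Matrix.mul_smul] using hasDerivAt_const_matrix_mul A (hasDerivAt_eiA A x)

theorem hasDerivAt_mul_eiA_neg (x : ℝ) :
    HasDerivAt (fun t => A * eiA A (-t)) (-Complex.I • (A * (A * eiA A (-x)))) x := by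
  simpa only [Matrix.mul_smul] using hasDerivAt_const_matrix_mul A (hasDerivAt_eiA_neg A x)

variable {A}

open scoped Pointwise in
theorem re_neg_of_mem_spectrum_I_smul (hA : ∀ μ ∈ spectrum ℂ A, 0 < μ.im) :
    ∀ μ ∈ spectrum ℂ (Complex.I • A), μ.re < 0 := by
  intro μ hμ
  obtain ⟨ν, hν, rfl⟩ : μ ∈ Units.mk0 Complex.I Complex.I_ne_zero • spectrum ℂ A := by
    rwa [← spectrum.unit_smul_eq_smul]
  simpa using! hA ν hν

theorem re_neg_of_mem_spectrum_neg_I_smul (hA : ∀ μ ∈ spectrum ℂ A, μ.im < 0) :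
    ∀ μ ∈ spectrum ℂ (-Complex.I • A), μ.re < 0 := by
  rw [neg_smul, ← smul_neg]
  refine re_neg_of_mem_spectrum_I_smul fun μ hμ => ?_
  rw [← spectrum.neg_eq, Set.mem_neg] at hμ
  simpa using hA _ hμ

variable {Ab : Matrix (Fin m) (Fin m) ℂ}

theorem sylvester_of_eq_integral_eiA_mul_mul_mul_eiA_neg (hA : ∀ μ ∈ spectrum ℂ A, 0 < μ.im)
    (hAb : ∀ μ ∈ spectrum ℂ Ab, μ.im < 0) {k : Type*} [Fintype k]
    {B : Matrix (Fin n) k ℂ} {C : Matrix k (Fin m) ℂ} {M : Matrix (Fin n) (Fin m) ℂ}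
    (hM : ∀ i j, M i j = ∫ z in Set.Ioi (0 : ℝ), (eiA A z * B * C * eiA Ab (-z)) i j) :
    A * M - M * Ab = Complex.I • (B * C) := by
  simp only [eiA_eq_exp_smul_I_smul A, eiA_neg_eq_exp_smul_neg_I_smul Ab,
    Matrix.mul_assoc _ B C] at hM
  have h := sylvester_of_eq_integral_exp_mul_mul_exp (re_neg_of_mem_spectrum_I_smul hA)
    (re_neg_of_mem_spectrum_neg_I_smul hAb) hM
  rw [Matrix.smul_mul, Matrix.mul_smul, neg_smul, ← sub_eq_add_neg, ← smul_sub] at h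
  calc A * M - M * Ab = -Complex.I • (Complex.I • (A * M - M * Ab)) := by simp [smul_smul]
    _ = Complex.I • (B * C) := by rw [h, smul_neg, neg_smul, neg_neg]

theorem sylvester_of_eq_integral_eiA_neg_mul_mul_mul_eiA (hA : ∀ μ ∈ spectrum ℂ A, 0 < μ.im)
    (hAb : ∀ μ ∈ spectrum ℂ Ab, μ.im < 0) {k : Type*} [Fintype k]
    {B : Matrix (Fin m) k ℂ} {C : Matrix k (Fin n) ℂ} {M : Matrix (Fin m) (Fin n) ℂ}
    (hM : ∀ i j, M i j = ∫ z in Set.Ioi (0 : ℝ), (eiA Ab (-z) * B * C * eiA A z) i j) :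
    Ab * M - M * A = -Complex.I • (B * C) := by
  simp only [eiA_eq_exp_smul_I_smul A, eiA_neg_eq_exp_smul_neg_I_smul Ab,
    Matrix.mul_assoc _ B C] at hM
  have h := sylvester_of_eq_integral_exp_mul_mul_exp (re_neg_of_mem_spectrum_neg_I_smul hAb)
    (re_neg_of_mem_spectrum_I_smul hA) hM
  rw [Matrix.smul_mul, Matrix.mul_smul, neg_smul, neg_add_eq_sub, ← smul_sub,
    ← neg_sub (Ab * M), smul_neg, neg_inj] at h
  calc Ab * M - M * A = -Complex.I • (Complex.I • (Ab * M - M * A)) := by simp [smul_smul]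
    _ = -Complex.I • (B * C) := by rw [h]

end ImaginaryExponential

section DressedExponential

variable {m n : ℕ}

/-- The single inverse `(e^{iAs} - M Ā e^{iĀs} M̄)⁻¹`. At `s = -2x` it is `e^{iAx} Γ(x)⁻¹ e^{iAx}`,
and with the two triplets exchanged, at `s = 2x`, it is `e^{-iĀx} Γ̄(x)⁻¹ e^{-iĀx}`. -/
noncomputable def dressedExp (A : Matrix (Fin n) (Fin n) ℂ) (Ab : Matrix (Fin m) (Fin m) ℂ)
    (M : Matrix (Fin n) (Fin m) ℂ) (Mb : Matrix (Fin m) (Fin n) ℂ) (s : ℝ) :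
    Matrix (Fin n) (Fin n) ℂ :=
  (eiA A s - M * (Ab * eiA Ab s) * Mb)⁻¹

variable {A : Matrix (Fin n) (Fin n) ℂ} {B : Matrix (Fin n) (Fin 1) ℂ}
  {C : Matrix (Fin 1) (Fin n) ℂ} {Ab : Matrix (Fin m) (Fin m) ℂ} {Bb : Matrix (Fin m) (Fin 1) ℂ}
  {Cb : Matrix (Fin 1) (Fin m) ℂ} {M : Matrix (Fin n) (Fin m) ℂ} {Mb : Matrix (Fin m) (Fin n) ℂ}
  {s : ℝ}

theorem eiA_mul_inv_mul_eiA_eq_dressedExp {Γ : Matrix (Fin n) (Fin n) ℂ} {x : ℝ}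
    (hΓ : Γ = 1 - eiA A x * M * Ab * eiA Ab s * Mb * eiA A x) (hs : s = -(2 * x)) :
    eiA A x * Γ⁻¹ * eiA A x = dressedExp A Ab M Mb s := by
  have hfactor : eiA A s - M * (Ab * eiA Ab s) * Mb = eiA A (-x) * Γ * eiA A (-x) := by
    have hsq : eiA A s = eiA A (-x) * eiA A (-x) := by rw [← eiA_add, hs]; ring_nf
    rw [hΓ, hsq]
    simp only [Matrix.mul_sub, Matrix.sub_mul, Matrix.mul_one, Matrix.mul_assoc, eiA_mul_eiA_neg]
    simp only [← Matrix.mul_assoc, eiA_neg_mul_eiA, Matrix.one_mul]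
  have hinv : (eiA A (-x))⁻¹ = eiA A x := inv_eq_left_inv (eiA_mul_eiA_neg A x)
  rw [dressedExp, hfactor, Matrix.mul_inv_rev, Matrix.mul_inv_rev, hinv, Matrix.mul_assoc]

theorem isUnit_dressedExp {Γ : Matrix (Fin n) (Fin n) ℂ} {x : ℝ}
    (hΓ : Γ = 1 - eiA A x * M * Ab * eiA Ab s * Mb * eiA A x) (hs : s = -(2 * x))
    (hu : IsUnit Γ) : IsUnit (dressedExp A Ab M Mb s) := by
  rw [← eiA_mul_inv_mul_eiA_eq_dressedExp hΓ hs]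
  exact ((isUnit_eiA A x).mul (isUnit_nonsing_inv_iff.2 hu)).mul (isUnit_eiA A x)

theorem mul_eiA_mul_inv_mul_eiA_eq_mul_dressedExp {k : Type*} {Γ : Matrix (Fin n) (Fin n) ℂ} {x : ℝ}
    (hΓ : Γ = 1 - eiA A x * M * Ab * eiA Ab s * Mb * eiA A x) (hs : s = -(2 * x))
    (C : Matrix k (Fin n) ℂ) :
    C * eiA A x * Γ⁻¹ * eiA A x = C * dressedExp A Ab M Mb s := by
  rw [← eiA_mul_inv_mul_eiA_eq_dressedExp hΓ hs]
  simp only [Matrix.mul_assoc]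

theorem dressedExp_mul (hu : IsUnit (dressedExp A Ab M Mb s)) :
    dressedExp A Ab M Mb s * (eiA A s - M * (Ab * eiA Ab s) * Mb) = 1 :=
  nonsing_inv_mul _ ((isUnit_iff_isUnit_det _).1 (isUnit_nonsing_inv_iff.1 hu))

theorem mul_dressedExp (hu : IsUnit (dressedExp A Ab M Mb s)) :
    (eiA A s - M * (Ab * eiA Ab s) * Mb) * dressedExp A Ab M Mb s = 1 :=
  mul_eq_one_comm.1 (dressedExp_mul hu)

theorem hasDerivAt_dressedExp (hu : IsUnit (dressedExp A Ab M Mb s)) :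
    HasDerivAt (dressedExp A Ab M Mb)
      (-Complex.I • (dressedExp A Ab M Mb s * A + dressedExp A Ab M Mb s * (A * M - M * Ab) *
        (Ab * eiA Ab s) * Mb * dressedExp A Ab M Mb s)) s :=
  hasDerivAt_inv_sub_mul_mul M Mb (hasDerivAt_eiA A s) (hasDerivAt_mul_eiA Ab s)
    (isUnit_nonsing_inv_iff.1 hu)

open scoped Matrix.Norms.Operator in
theorem continuousAt_dressedExp (hu : IsUnit (dressedExp A Ab M Mb s)) :
    ContinuousAt (dressedExp A Ab M Mb) s :=
  (hasDerivAt_dressedExp hu).continuousAt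

theorem mul_mul_dressedExp_mul_apply_eq (hS : A * M - M * Ab = Complex.I • (B * Cb))
    (hSb : Ab * Mb - Mb * A = -Complex.I • (Bb * C)) (hP : IsUnit (dressedExp A Ab M Mb s)) :
    (Cb * (Ab * eiA Ab s * Mb * dressedExp A Ab M Mb s) * B) 0 0 =
      (C * dressedExp A Ab M Mb s * M * (Ab * eiA Ab s) * Bb) 0 0 := by
  set P := dressedExp A Ab M Mb s
  set D := Ab * eiA Ab s
  have htrace : trace (P * ((A * M - M * Ab) * D * Mb + M * D * (Ab * Mb - Mb * A))) = 0 :=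
    trace_inv_mul_commutator_add_eq_zero (commute_eiA A s).eq
      ((Commute.refl Ab).mul_right (commute_eiA Ab s)).eq (dressedExp_mul hP)
  have hcycle : trace (P * (B * Cb * D * Mb)) = trace (D * Mb * P * (B * Cb)) := by
    simpa only [Matrix.mul_assoc] using trace_mul_comm (P * (B * Cb)) (D * Mb)
  have hdiff : Complex.I * (trace (D * Mb * P * (B * Cb)) - trace (P * M * D * (Bb * C))) = 0 := by
    rw [← hcycle, ← htrace, hS, hSb]
    simp only [Matrix.smul_mul, Matrix.mul_smul, Matrix.mul_add, trace_add, trace_smul, neg_smul,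
      smul_eq_mul, Matrix.mul_assoc, Matrix.mul_neg, trace_neg]
    ring
  rw [trace_mul_mul_fin_one, trace_mul_mul_fin_one] at hdiff
  simpa only [Matrix.mul_assoc] using
    sub_eq_zero.1 ((mul_eq_zero.1 hdiff).resolve_left Complex.I_ne_zero)

theorem dressedExp_apply_sub_dressedExp_apply (hS : A * M - M * Ab = Complex.I • (B * Cb))
    (hSb : Ab * Mb - Mb * A = -Complex.I • (Bb * C)) (hP : IsUnit (dressedExp A Ab M Mb (-s)))
    (hQ : IsUnit (dressedExp Ab A Mb M s)) :
    (Cb * dressedExp Ab A Mb M s * Mb * (A * eiA A s) * B) 0 0 -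
        (C * dressedExp A Ab M Mb (-s) * M * (Ab * eiA Ab (-s)) * Bb) 0 0 =
      Complex.I * (C * dressedExp A Ab M Mb (-s) * B) 0 0 *
        (Cb * dressedExp Ab A Mb M s * Bb) 0 0 := by
  set P := dressedExp A Ab M Mb (-s)
  set Q := dressedExp Ab A Mb M s
  have push : Ab * eiA Ab (-s) * Mb * P =
      Q * Mb * (A * eiA A s) + Q * (Ab * Mb - Mb * A) * P :=
    mul_mul_inv_eq_inv_mul_mul_add (eiA_mul_mul_eiA_neg Ab s) (mul_eiA_mul_eiA_neg A s)
      (dressedExp_mul hQ) (mul_dressedExp hP)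
  have hdyad : (Cb * Q * (Bb * C) * (P * B)) 0 0 = (Cb * Q * Bb) 0 0 * (C * P * B) 0 0 := by
    rw [mul_mul_mul_apply_fin_one, ← Matrix.mul_assoc C]
  rw [← mul_mul_dressedExp_mul_apply_eq hS hSb hP, push, hSb]
  simp only [Matrix.mul_add, Matrix.add_mul, Matrix.mul_smul, Matrix.smul_mul, Matrix.add_apply,
    Matrix.smul_apply, smul_eq_mul, Matrix.mul_assoc] at hdyad ⊢
  rw [hdyad]
  ring

theorem mul_mul_dressedExp_apply (hS : A * M - M * Ab = Complex.I • (B * Cb))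
    (hP : IsUnit (dressedExp A Ab M Mb (-s))) (hQ : IsUnit (dressedExp Ab A Mb M s))
    (w : Matrix (Fin m) (Fin 1) ℂ) :
    (C * (A * eiA A s * M * dressedExp Ab A Mb M s) * w) 0 0 =
      (C * dressedExp A Ab M Mb (-s) * M * (Ab * eiA Ab (-s)) * w) 0 0 +
        Complex.I * ((C * dressedExp A Ab M Mb (-s) * B) 0 0 *
          (Cb * dressedExp Ab A Mb M s * w) 0 0) := by
  set P := dressedExp A Ab M Mb (-s)
  set Q := dressedExp Ab A Mb M s
  have push : A * eiA A s * M * Q = P * M * (Ab * eiA Ab (-s)) + P * (A * M - M * Ab) * Q :=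
    mul_mul_inv_eq_inv_mul_mul_add (eiA_neg_mul_mul_eiA A s) (mul_eiA_neg_mul_eiA Ab s)
      (dressedExp_mul hP) (mul_dressedExp hQ)
  have hdyad : (C * P * (B * Cb) * (Q * w)) 0 0 = (C * P * B) 0 0 * (Cb * Q * w) 0 0 := by
    rw [mul_mul_mul_apply_fin_one, ← Matrix.mul_assoc Cb]
  rw [push, hS, ← hdyad]
  simp only [Matrix.mul_add, Matrix.add_mul, Matrix.mul_smul, Matrix.smul_mul, Matrix.add_apply,
    Matrix.smul_apply, smul_eq_mul, Matrix.mul_assoc]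

theorem add_mul_dressedExp_mul_apply (hSb : Ab * Mb - Mb * A = -Complex.I • (Bb * C))
    (hP : IsUnit (dressedExp A Ab M Mb (-s))) (hQ : IsUnit (dressedExp Ab A Mb M s))
    {w : Matrix (Fin m) (Fin 1) ℂ} {ν : ℂ} (hw : Ab * w = Bb + ν • w) :
    (Cb * (Ab * eiA Ab (-s) + Ab * eiA Ab (-s) * Mb * dressedExp A Ab M Mb (-s) * M *
        (Ab * eiA Ab (-s))) * w) 0 0 =
      ν * (Cb * dressedExp Ab A Mb M s * w) 0 0 + (Cb * dressedExp Ab A Mb M s * Bb) 0 0 *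
        (1 - Complex.I * (C * dressedExp A Ab M Mb (-s) * M * (Ab * eiA Ab (-s)) * w) 0 0) := by
  set P := dressedExp A Ab M Mb (-s)
  set Q := dressedExp Ab A Mb M s
  set D := Ab * eiA Ab (-s)
  have hwoodbury : D + D * Mb * P * M * D = Q * (Ab + (Ab * Mb - Mb * A) * P * M * D) :=
    add_mul_inv_mul_eq_inv_mul (mul_eiA_mul_eiA_neg A s) (eiA_mul_mul_eiA_neg Ab s)
      (mul_dressedExp hP) (dressedExp_mul hQ)
  have hdyad : (Cb * Q * (Bb * C) * (P * M * D * w)) 0 0 =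
      (Cb * Q * Bb) 0 0 * (C * P * M * D * w) 0 0 := by
    rw [mul_mul_mul_apply_fin_one]
    simp only [← Matrix.mul_assoc]
  calc (Cb * (D + D * Mb * P * M * D) * w) 0 0
      = (Cb * Q * (Ab * w)) 0 0 - Complex.I * (Cb * Q * (Bb * C) * (P * M * D * w)) 0 0 := by
        rw [hwoodbury, hSb]
        simp only [Matrix.mul_add, Matrix.add_mul, Matrix.mul_smul, Matrix.smul_mul,
          Matrix.add_apply, Matrix.smul_apply, smul_eq_mul, Matrix.mul_assoc]
        ring
    _ = _ := by
        rw [hw, hdyad, Matrix.mul_add, Matrix.mul_smul, Matrix.add_apply, Matrix.smul_apply,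
          smul_eq_mul]
        ring

theorem hasDerivAt_dressedExp_apply (hS : A * M - M * Ab = Complex.I • (B * Cb))
    (hSb : Ab * Mb - Mb * A = -Complex.I • (Bb * C)) (hP : IsUnit (dressedExp A Ab M Mb (-s)))
    (hQ : IsUnit (dressedExp Ab A Mb M s)) {w : Matrix (Fin m) (Fin 1) ℂ} {ν : ℂ}
    (hw : Ab * w = Bb + ν • w) :
    HasDerivAt (fun t => (Cb * dressedExp Ab A Mb M t * w) 0 0)
      (-Complex.I * (ν * (Cb * dressedExp Ab A Mb M s * w) 0 0 +
        (Cb * dressedExp Ab A Mb M s * Bb) 0 0 *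
          (1 - Complex.I * (C * dressedExp A Ab M Mb (-s) * M * (Ab * eiA Ab (-s)) * w) 0 0 +
            (C * dressedExp A Ab M Mb (-s) * B) 0 0 *
              (Cb * dressedExp Ab A Mb M s * w) 0 0))) s := by
  set Q := dressedExp Ab A Mb M s
  convert! hasDerivAt_matrix.1 (hasDerivAt_matrix_mul_const
    (hasDerivAt_const_matrix_mul Cb (hasDerivAt_dressedExp hQ)) w) 0 0 using 1
  have hdyad : (Cb * Q * (Bb * C) * (A * eiA A s * M * Q * w)) 0 0 =
      (Cb * Q * Bb) 0 0 * (C * (A * eiA A s * M * Q) * w) 0 0 := by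
    rw [mul_mul_mul_apply_fin_one, Matrix.mul_assoc C]
  rw [mul_mul_dressedExp_apply hS hP hQ] at hdyad
  symm
  calc (Cb * (-Complex.I • (Q * Ab + Q * (Ab * Mb - Mb * A) * (A * eiA A s) * M * Q)) * w) 0 0
      = -Complex.I * ((Cb * Q * (Ab * w)) 0 0 -
          Complex.I * (Cb * Q * (Bb * C) * (A * eiA A s * M * Q * w)) 0 0) := by
        rw [hSb]
        simp only [Matrix.mul_add, Matrix.add_mul, Matrix.mul_smul, Matrix.smul_mul,
          Matrix.add_apply, Matrix.smul_apply, smul_eq_mul, Matrix.mul_assoc]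
        ring
    _ = _ := by
        rw [hw, hdyad, Matrix.mul_add, Matrix.mul_smul, Matrix.add_apply, Matrix.smul_apply,
          smul_eq_mul]
        linear_combination Complex.I * (Cb * Q * Bb) 0 0 *
          ((C * dressedExp A Ab M Mb (-s) * B) 0 0 * (Cb * Q * w) 0 0) * Complex.I_sq

theorem hasDerivAt_dressedExp_neg_mul_apply (hS : A * M - M * Ab = Complex.I • (B * Cb))
    (hSb : Ab * Mb - Mb * A = -Complex.I • (Bb * C)) (hP : IsUnit (dressedExp A Ab M Mb (-s)))
    (hQ : IsUnit (dressedExp Ab A Mb M s)) {w : Matrix (Fin m) (Fin 1) ℂ} {ν : ℂ}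
    (hw : Ab * w = Bb + ν • w) :
    HasDerivAt (fun t => (C * dressedExp A Ab M Mb (-t) * M * (Ab * eiA Ab (-t)) * w) 0 0)
      (-(C * dressedExp A Ab M Mb (-s) * B) 0 0 * (ν * (Cb * dressedExp Ab A Mb M s * w) 0 0 +
        (Cb * dressedExp Ab A Mb M s * Bb) 0 0 *
          (1 - Complex.I *
            (C * dressedExp A Ab M Mb (-s) * M * (Ab * eiA Ab (-s)) * w) 0 0))) s := by
  rw [← add_mul_dressedExp_mul_apply hSb hP hQ hw]
  set P := dressedExp A Ab M Mb (-s)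
  set D := Ab * eiA Ab (-s)
  have hderiv : HasDerivAt (fun t => dressedExp A Ab M Mb (-t) * M * (Ab * eiA Ab (-t)))
      (- -Complex.I • (P * (A * M - M * Ab) * (D + D * Mb * P * M * D))) s :=
    hasDerivAt_inv_sub_mul_mul_mul_mul M Mb (hasDerivAt_eiA_neg A s) (hasDerivAt_mul_eiA_neg Ab s)
      (isUnit_nonsing_inv_iff.1 hP)
  have hdyad : (C * P * (B * Cb) * ((D + D * Mb * P * M * D) * w)) 0 0 =
      (C * P * B) 0 0 * (Cb * (D + D * Mb * P * M * D) * w) 0 0 := by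
    rw [mul_mul_mul_apply_fin_one, Matrix.mul_assoc Cb]
  convert! hasDerivAt_matrix.1 (hasDerivAt_matrix_mul_const
    (hasDerivAt_const_matrix_mul C hderiv) w) 0 0 using 1
  · simp only [Matrix.mul_assoc]
  · rw [neg_mul, ← hdyad, hS]
    simp only [Matrix.mul_smul, Matrix.smul_mul, Matrix.smul_apply, smul_smul, smul_eq_mul,
      Matrix.mul_assoc, neg_neg, Complex.I_mul_I, neg_one_mul]

end DressedExponential

section Jost

theorem hasDerivAt_gauged_jost {g₃ g₄ G : ℝ → ℂ} {u v ζ : ℂ} {x : ℝ}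
    (hg₃ : HasDerivAt g₃ (-2 * Complex.I * ζ ^ 2 * g₃ x + 2 * v * g₄ x
      - 2 * Complex.I * u * v * g₃ x) x)
    (hg₄ : HasDerivAt g₄ (2 * ζ ^ 2 * u * g₃ x + 2 * Complex.I * u * v * g₄ x) x)
    (hG : HasDerivAt G (-(Complex.I * u * v)) x) :
    HasDerivAt
      (fun t : ℝ => ζ * Complex.exp (Complex.I * ζ ^ 2 * t) * g₃ t * Complex.exp (-2 * G t))
      (-Complex.I * ζ ^ 2 *
          (ζ * Complex.exp (Complex.I * ζ ^ 2 * x) * g₃ x * Complex.exp (-2 * G x)) +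
        ζ * (2 * v * Complex.exp (-4 * G x)) *
          (Complex.exp (Complex.I * ζ ^ 2 * x) * g₄ x * Complex.exp (2 * G x))) x ∧
    HasDerivAt (fun t : ℝ => Complex.exp (Complex.I * ζ ^ 2 * t) * g₄ t * Complex.exp (2 * G t))
      (ζ * (2 * u * Complex.exp (4 * G x)) *
          (ζ * Complex.exp (Complex.I * ζ ^ 2 * x) * g₃ x * Complex.exp (-2 * G x)) +
        Complex.I * ζ ^ 2 *
          (Complex.exp (Complex.I * ζ ^ 2 * x) * g₄ x * Complex.exp (2 * G x))) x := by
  have hphase : HasDerivAt (fun t : ℝ => Complex.exp (Complex.I * ζ ^ 2 * t))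
      (Complex.exp (Complex.I * ζ ^ 2 * x) * (Complex.I * ζ ^ 2)) x := by
    simpa using (Complex.ofRealCLM.hasDerivAt.const_mul (Complex.I * ζ ^ 2)).cexp
  have hexp_neg : Complex.exp (-2 * G x) = Complex.exp (-4 * G x) * Complex.exp (2 * G x) := by
    rw [← Complex.exp_add]
    ring_nf
  have hexp : Complex.exp (2 * G x) = Complex.exp (4 * G x) * Complex.exp (-2 * G x) := by
    rw [← Complex.exp_add]
    ring_nf
  constructor
  · convert! ((hphase.const_mul ζ).fun_mul hg₃).fun_mul (hG.const_mul (-2)).cexp using 1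
    linear_combination -2 * ζ * v * Complex.exp (Complex.I * ζ ^ 2 * x) * g₄ x * hexp_neg
  · convert! (hphase.fun_mul hg₄).fun_mul (hG.const_mul 2).cexp using 1
    linear_combination -2 * ζ ^ 2 * u * Complex.exp (Complex.I * ζ ^ 2 * x) * g₃ x * hexp

variable {m n : ℕ} {A : Matrix (Fin n) (Fin n) ℂ} {B : Matrix (Fin n) (Fin 1) ℂ}
  {C : Matrix (Fin 1) (Fin n) ℂ} {Ab : Matrix (Fin m) (Fin m) ℂ} {Bb : Matrix (Fin m) (Fin 1) ℂ}
  {Cb : Matrix (Fin 1) (Fin m) ℂ} {M : Matrix (Fin n) (Fin m) ℂ} {Mb : Matrix (Fin m) (Fin n) ℂ}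
  {w : Matrix (Fin m) (Fin 1) ℂ} {ν : ℂ} {x : ℝ}

theorem hasDerivAt_jost_amplitudes (hS : A * M - M * Ab = Complex.I • (B * Cb))
    (hSb : Ab * Mb - Mb * A = -Complex.I • (Bb * C))
    (hP : IsUnit (dressedExp A Ab M Mb (-(2 * x)))) (hQ : IsUnit (dressedExp Ab A Mb M (2 * x)))
    (hw : Ab * w = Bb + ν • w) {g₃ g₄ : ℝ → ℂ}
    (hg₃ : ∀ t, g₃ t = Complex.I * (Cb * dressedExp Ab A Mb M (2 * t) * w) 0 0)
    (hg₄ : ∀ t, g₄ t = 1 - Complex.I *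
      (C * dressedExp A Ab M Mb (-(2 * t)) * M * (Ab * eiA Ab (-(2 * t))) * w) 0 0) :
    HasDerivAt g₃ (-2 * Complex.I * ν * g₃ x
      + 2 * (Cb * dressedExp Ab A Mb M (2 * x) * Bb) 0 0 * g₄ x
      - 2 * Complex.I * (C * dressedExp A Ab M Mb (-(2 * x)) * B) 0 0 *
        (Cb * dressedExp Ab A Mb M (2 * x) * Bb) 0 0 * g₃ x) x ∧
    HasDerivAt g₄ (2 * ν * (C * dressedExp A Ab M Mb (-(2 * x)) * B) 0 0 * g₃ x
      + 2 * Complex.I * (C * dressedExp A Ab M Mb (-(2 * x)) * B) 0 0 *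
        (Cb * dressedExp Ab A Mb M (2 * x) * Bb) 0 0 * g₄ x) x := by
  have hdouble : HasDerivAt (fun t : ℝ => 2 * t) 2 x := by
    simpa using (hasDerivAt_id x).const_mul (2 : ℝ)
  have hderiv₃ := (hasDerivAt_dressedExp_apply hS hSb hP hQ hw).scomp x hdouble
  have hderiv₄ := (hasDerivAt_dressedExp_neg_mul_apply hS hSb hP hQ hw).scomp x hdouble
  rw [hg₃ x, hg₄ x]
  constructor
  · rw [funext hg₃]
    convert! hderiv₃.const_mul Complex.I using 1
    rw [Complex.real_smul, Complex.ofReal_ofNat]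
    linear_combination 2 * (Cb * dressedExp Ab A Mb M (2 * x) * Bb) 0 0 * (1 - Complex.I *
      (C * dressedExp A Ab M Mb (-(2 * x)) * M * (Ab * eiA Ab (-(2 * x))) * w) 0 0) * Complex.I_sq
  · rw [funext hg₄]
    convert! (hderiv₄.const_mul Complex.I).const_sub 1 using 1
    rw [Complex.real_smul, Complex.ofReal_ofNat]
    ring

end Jost

theorem reconstructed_jost_solves_general
    (𝒩 𝒩b : ℕ)
    (A : Matrix (Fin 𝒩) (Fin 𝒩) ℂ)
    (B : Matrix (Fin 𝒩) (Fin 1) ℂ) (C : Matrix (Fin 1) (Fin 𝒩) ℂ)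
    (Ab : Matrix (Fin 𝒩b) (Fin 𝒩b) ℂ)
    (Bb : Matrix (Fin 𝒩b) (Fin 1) ℂ) (Cb : Matrix (Fin 1) (Fin 𝒩b) ℂ)
    (M : Matrix (Fin 𝒩) (Fin 𝒩b) ℂ)
    (hM : A * M - M * Ab = Complex.I • (B * Cb))
    (Mb : Matrix (Fin 𝒩b) (Fin 𝒩) ℂ)
    (hMb : Ab * Mb - Mb * A = -Complex.I • (Bb * C))
    (Γ : ℝ → Matrix (Fin 𝒩) (Fin 𝒩) ℂ)
    (hΓ : ∀ x : ℝ, Γ x = 1 - eiA A x * M * Ab * eiA Ab (-(2 * x)) * Mb * eiA A x)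
    (Γb : ℝ → Matrix (Fin 𝒩b) (Fin 𝒩b) ℂ)
    (hΓb : ∀ x : ℝ, Γb x = 1 - eiA Ab (-x) * Mb * A * eiA A (2 * x) * M * eiA Ab (-x))
    (hΓinv : ∀ x : ℝ, IsUnit (Γ x)) (hΓbinv : ∀ x : ℝ, IsUnit (Γb x))
    (g₁ g₂ : ℝ → ℂ)
    (hg₁ : ∀ z : ℝ, g₁ z
      = (Cb * eiA Ab (-z) * (Γb z)⁻¹ * eiA Ab (-z) * Mb * (A * eiA A (2 * z)) * B) 0 0)
    (hg₂ : ∀ z : ℝ, g₂ z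
      = (C * eiA A z * (Γ z)⁻¹ * eiA A z * M * (Ab * eiA Ab (-(2 * z))) * Bb) 0 0)
    (hgint : ∀ x : ℝ, IntegrableOn (fun z => g₁ z - g₂ z) (Set.Ici x))
    (G : ℝ → ℂ)
    (hG : ∀ x : ℝ, G x = ∫ z in Set.Ioi x, (g₁ z - g₂ z))
    (q r : ℝ → ℂ)
    (hq : ∀ x : ℝ, q x
      = 2 * ((Cb * eiA Ab (-x) * (Γb x)⁻¹ * eiA Ab (-x) * Bb) 0 0)
        * Complex.exp (-4 * G x))
    (hr : ∀ x : ℝ, r x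
      = 2 * ((C * eiA A x * (Γ x)⁻¹ * eiA A x * B) 0 0) * Complex.exp (4 * G x))
    (ζ : ℂ) (hζ : ζ ^ 2 ∉ spectrum ℂ Ab)
    (g₃ g₄ : ℝ → ℂ)
    (hg₃ : ∀ x : ℝ, g₃ x
      = Complex.I * ((Cb * eiA Ab (-x) * (Γb x)⁻¹ * eiA Ab (-x)
          * (Ab - ζ ^ 2 • (1 : Matrix (Fin 𝒩b) (Fin 𝒩b) ℂ))⁻¹ * Bb) 0 0))
    (hg₄ : ∀ x : ℝ, g₄ x
      = 1 - Complex.I * ((C * eiA A x * (Γ x)⁻¹ * eiA A x * M * (Ab * eiA Ab (-(2 * x)))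
          * (Ab - ζ ^ 2 • (1 : Matrix (Fin 𝒩b) (Fin 𝒩b) ℂ))⁻¹ * Bb) 0 0))
    (ψ₁ ψ₂ : ℝ → ℂ)
    (hψ₁ : ∀ x : ℝ, ψ₁ x
      = ζ * Complex.exp (Complex.I * ζ ^ 2 * x) * g₃ x * Complex.exp (-2 * G x))
    (hψ₂ : ∀ x : ℝ, ψ₂ x
      = Complex.exp (Complex.I * ζ ^ 2 * x) * g₄ x * Complex.exp (2 * G x)) :
    ∀ x : ℝ,
      HasDerivAt ψ₁ (-Complex.I * ζ ^ 2 * ψ₁ x + ζ * q x * ψ₂ x) x ∧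
      HasDerivAt ψ₂ (ζ * r x * ψ₁ x + Complex.I * ζ ^ 2 * ψ₂ x) x := by
  have hP (x : ℝ) := isUnit_dressedExp (hΓ x) rfl (hΓinv x)
  have hQ (x : ℝ) : IsUnit (dressedExp Ab A Mb M (2 * x)) :=
    isUnit_dressedExp (hΓb x) (by ring) (hΓbinv x)
  have hCP (x : ℝ) := mul_eiA_mul_inv_mul_eiA_eq_mul_dressedExp (hΓ x) rfl C
  have hCbQ (x : ℝ) := mul_eiA_mul_inv_mul_eiA_eq_mul_dressedExp (hΓb x) (by ring) Cb
  simp only [hCP, hCbQ, Matrix.mul_assoc _ _⁻¹ Bb] at hg₁ hg₂ hq hr hg₃ hg₄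
  have hsub (z : ℝ) := dressedExp_apply_sub_dressedExp_apply hM hMb (hP z) (hQ z)
  simp only [hg₁, hg₂, hsub] at hgint hG
  have hPcont : Continuous fun z : ℝ => dressedExp A Ab M Mb (-(2 * z)) :=
    continuous_iff_continuousAt.2 fun z =>
      (continuousAt_dressedExp (hP z)).comp (f := fun z => -(2 * z)) (by fun_prop)
  have hQcont : Continuous fun z : ℝ => dressedExp Ab A Mb M (2 * z) :=
    continuous_iff_continuousAt.2 fun z =>
      (continuousAt_dressedExp (hQ z)).comp (f := fun z => 2 * z) (by fun_prop)
  intro x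
  have hG' := funext hG ▸ hasDerivAt_integral_Ioi (by fun_prop) hgint x
  obtain ⟨hg₃', hg₄'⟩ := hasDerivAt_jost_amplitudes hM hMb (hP x) (hQ x)
    (mul_inv_sub_smul_one_mul hζ Bb) hg₃ hg₄
  rw [funext hψ₁, funext hψ₂, hq, hr]
  exact hasDerivAt_gauged_jost hg₃' hg₄' hG'

/-- Theorems 5.2–5.3: the reconstructed Jost solution (ψ₁, ψ₂), built explicitly from
the matrix triplets, solves system (1.1) with the reconstructed reflectionless
potentials q, r. -/
theorem reconstructed_jost_solves
    (𝒩 𝒩b : ℕ)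
    (A : Matrix (Fin 𝒩) (Fin 𝒩) ℂ) (hA : ∀ μ ∈ spectrum ℂ A, 0 < μ.im)
    (B : Matrix (Fin 𝒩) (Fin 1) ℂ) (C : Matrix (Fin 1) (Fin 𝒩) ℂ)
    (Ab : Matrix (Fin 𝒩b) (Fin 𝒩b) ℂ) (hAb : ∀ μ ∈ spectrum ℂ Ab, μ.im < 0)
    (Bb : Matrix (Fin 𝒩b) (Fin 1) ℂ) (Cb : Matrix (Fin 1) (Fin 𝒩b) ℂ)
    (M : Matrix (Fin 𝒩) (Fin 𝒩b) ℂ)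
    (hM : ∀ i j, M i j = ∫ z in Set.Ioi (0 : ℝ), (eiA A z * B * Cb * eiA Ab (-z)) i j)
    (Mb : Matrix (Fin 𝒩b) (Fin 𝒩) ℂ)
    (hMb : ∀ i j, Mb i j = ∫ z in Set.Ioi (0 : ℝ), (eiA Ab (-z) * Bb * C * eiA A z) i j)
    (Γ : ℝ → Matrix (Fin 𝒩) (Fin 𝒩) ℂ)
    (hΓ : ∀ x : ℝ, Γ x = 1 - eiA A x * M * Ab * eiA Ab (-(2 * x)) * Mb * eiA A x)
    (Γb : ℝ → Matrix (Fin 𝒩b) (Fin 𝒩b) ℂ)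
    (hΓb : ∀ x : ℝ, Γb x = 1 - eiA Ab (-x) * Mb * A * eiA A (2 * x) * M * eiA Ab (-x))
    (hΓinv : ∀ x : ℝ, IsUnit (Γ x)) (hΓbinv : ∀ x : ℝ, IsUnit (Γb x))
    (g₁ g₂ : ℝ → ℂ)
    (hg₁ : ∀ z : ℝ, g₁ z
      = (Cb * eiA Ab (-z) * (Γb z)⁻¹ * eiA Ab (-z) * Mb * (A * eiA A (2 * z)) * B) 0 0)
    (hg₂ : ∀ z : ℝ, g₂ z
      = (C * eiA A z * (Γ z)⁻¹ * eiA A z * M * (Ab * eiA Ab (-(2 * z))) * Bb) 0 0)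
    (hgint : ∀ x : ℝ, IntegrableOn (fun z => g₁ z - g₂ z) (Set.Ici x))
    (G : ℝ → ℂ)
    (hG : ∀ x : ℝ, G x = ∫ z in Set.Ioi x, (g₁ z - g₂ z))
    (q r : ℝ → ℂ)
    (hq : ∀ x : ℝ, q x
      = 2 * ((Cb * eiA Ab (-x) * (Γb x)⁻¹ * eiA Ab (-x) * Bb) 0 0)
        * Complex.exp (-4 * G x))
    (hr : ∀ x : ℝ, r x
      = 2 * ((C * eiA A x * (Γ x)⁻¹ * eiA A x * B) 0 0) * Complex.exp (4 * G x))
    (ζ : ℂ) (hζ : ζ ^ 2 ∉ spectrum ℂ Ab)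
    (g₃ g₄ : ℝ → ℂ)
    (hg₃ : ∀ x : ℝ, g₃ x
      = Complex.I * ((Cb * eiA Ab (-x) * (Γb x)⁻¹ * eiA Ab (-x)
          * (Ab - ζ ^ 2 • (1 : Matrix (Fin 𝒩b) (Fin 𝒩b) ℂ))⁻¹ * Bb) 0 0))
    (hg₄ : ∀ x : ℝ, g₄ x
      = 1 - Complex.I * ((C * eiA A x * (Γ x)⁻¹ * eiA A x * M * (Ab * eiA Ab (-(2 * x)))
          * (Ab - ζ ^ 2 • (1 : Matrix (Fin 𝒩b) (Fin 𝒩b) ℂ))⁻¹ * Bb) 0 0))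
    (ψ₁ ψ₂ : ℝ → ℂ)
    (hψ₁ : ∀ x : ℝ, ψ₁ x
      = ζ * Complex.exp (Complex.I * ζ ^ 2 * x) * g₃ x * Complex.exp (-2 * G x))
    (hψ₂ : ∀ x : ℝ, ψ₂ x
      = Complex.exp (Complex.I * ζ ^ 2 * x) * g₄ x * Complex.exp (2 * G x)) :
    ∀ x : ℝ,
      HasDerivAt ψ₁ (-Complex.I * ζ ^ 2 * ψ₁ x + ζ * q x * ψ₂ x) x ∧
      HasDerivAt ψ₂ (ζ * r x * ψ₁ x + Complex.I * ζ ^ 2 * ψ₂ x) x := by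
  exact reconstructed_jost_solves_general 𝒩 𝒩b A B C Ab Bb Cb
    M (sylvester_of_eq_integral_eiA_mul_mul_mul_eiA_neg hA hAb hM)
    Mb (sylvester_of_eq_integral_eiA_neg_mul_mul_mul_eiA hA hAb hMb)
    Γ hΓ Γb hΓb hΓinv hΓbinv g₁ g₂ hg₁ hg₂ hgint G hG q r hq hr ζ hζ g₃ g₄ hg₃ hg₄ ψ₁ ψ₂ hψ₁ hψ₂
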